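/- arXiv:2011.03033 — 2 statements merged into one kernel-verified Lean document; each statement's English description precedes it below -/
import Mathlib

section
/- Let D be a symmetric cycle in the hypercube graph H(t,2), let alpha >= 1, and let A_1,...,A_alpha be subsets of [t]. Then x(T_{A_1 union ... union A_alpha},D) = - sum over all nonempty subsets S of [alpha] of (-1)^{|S|} * x(T_{intersection of A_s over s in S},D). -/
open Finset

noncomputable section

/-- Row vectors of `ℝ^t`. -/
abbrev Vec (t : ℕ) := Fin t → ℝ

/-- `T` is a vertex of the discrete hypercube `{1,-1}^t`. -/
def IsPMVertex {t : ℕ} (T : Vec t) : Prop := ∀ i, T i = 1 ∨ T i = -1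

/-- `T` is a vertex of the discrete hypercube `{0,1}^t`. -/
def Is01Vertex {t : ℕ} (T : Vec t) : Prop := ∀ i, T i = 0 ∨ T i = 1

open Classical in
/-- Hamming distance between two vectors. -/
def hamming {t : ℕ} (X Y : Vec t) : ℕ :=
  (Finset.univ.filter fun i => X i ≠ Y i).card

/-- The standard scalar product on `ℝ^t`. -/
def sprod {t : ℕ} (X Y : Vec t) : ℝ := ∑ i, X i * Y i

open Classical in
/-- The cardinality of the negative part `T⁻ = {e : T e = -1}` of `T`. -/
def negCard {t : ℕ} (T : Vec t) : ℕ :=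
  (Finset.univ.filter fun i => T i = -1).card

open Classical in
/-- The Hamming weight (number of coordinates equal to `1`) of a `0/1`-vector. -/
def hwt01 {t : ℕ} (T : Vec t) : ℕ :=
  (Finset.univ.filter fun i => T i = 1).card

/-- `D` (read as a `2t`-periodic sequence `D^0, D^1, …`) is a symmetric cycle in the
hypercube graph `H(t,2)` on the vertex set `{1,-1}^t`: all `D^k` are vertices,
consecutive members are adjacent (Hamming distance `1`), the `2t` members
`D^0, …, D^{2t-1}` are pairwise distinct, and `D^{k+t} = -D^k` for `0 ≤ k ≤ t-1`. -/
structure IsSymCycle (t : ℕ) (D : ℕ → Vec t) : Prop where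
  vertex : ∀ k, IsPMVertex (D k)
  periodic : ∀ k, D (k + 2 * t) = D k
  adj : ∀ k, hamming (D k) (D (k + 1)) = 1
  inj : ∀ k l, k < 2 * t → l < 2 * t → D k = D l → k = l
  symm : ∀ k, k ≤ t - 1 → D (k + t) = -(D k)

/-- `D` is a symmetric cycle in the hypercube graph on the vertex set `{0,1}^t`:
here `D^{k+t} = (1,…,1) - D^k` for `0 ≤ k ≤ t-1`. -/
structure IsSymCycle01 (t : ℕ) (D : ℕ → Vec t) : Prop where
  vertex : ∀ k, Is01Vertex (D k)
  periodic : ∀ k, D (k + 2 * t) = D k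
  adj : ∀ k, hamming (D k) (D (k + 1)) = 1
  inj : ∀ k l, k < 2 * t → l < 2 * t → D k = D l → k = l
  symm : ∀ k, k ≤ t - 1 → D (k + t) = (fun _ => 1) - D k

open Classical in
/-- The vertex sequence `V(D) = (D^0, …, D^{2t-1})` of a cycle, as a finset. -/
def VD (t : ℕ) (D : ℕ → Vec t) : Finset (Vec t) :=
  (Finset.range (2 * t)).image D

/-- `Q` is an inclusion-minimal subset of `V(D)` whose members sum to `T` (in `ℝ^t`). -/
def IsMinDecomp (t : ℕ) (D : ℕ → Vec t) (T : Vec t) (Q : Finset (Vec t)) : Prop :=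
  Q ⊆ VD t D ∧ (∑ q ∈ Q, q) = T ∧
    ∀ Q' : Finset (Vec t), Q' ⊆ VD t D → (∑ q ∈ Q', q) = T → ¬Q' ⊂ Q

/-- The vertex `T_S ∈ {1,-1}^t` whose negative part is `S`. -/
def topeOf (t : ℕ) (S : Finset (Fin t)) : Vec t := fun i => if i ∈ S then -1 else 1

/-- `x` is a coordinate vector of `T` w.r.t. `(D^0, …, D^{t-1})` with all
components in `{-1,0,1}`; by uniqueness this is the vector `x(T,D)`. -/
def IsXVec (t : ℕ) (D : ℕ → Vec t) (T : Vec t) (x : Fin t → ℝ) : Prop :=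
  (∀ i, x i = -1 ∨ x i = 0 ∨ x i = 1) ∧ T = ∑ i : Fin t, x i • D (i : ℕ)

open Classical in
/-- The `{0,1}`-decomposition equation
`T = -(|Q|-1)/2 • (1,…,1) + ∑_{q ∈ Q, q ≠ 0} q`. -/
def Decomp01 (t : ℕ) (T : Vec t) (Q : Finset (Vec t)) : Prop :=
  T = (-(((Q.card : ℝ) - 1) / 2)) • (fun _ => 1 : Vec t) +
    ∑ q ∈ Q.filter (fun q => q ≠ (0 : Vec t)), q

/-- `R^k` for `0 ≤ k ≤ t-1`: the all-ones vector with the first `k` coordinates negated. -/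
def Rvec (t : ℕ) (k : ℕ) : Vec t := fun i => if (i : ℕ) < k then -1 else 1

/-- The distinguished symmetric cycle `R` in `H(t,2)`:
`R^0 = (1,…,1)`, `R^s = {}_{-[s]}R^0` for `1 ≤ s ≤ t-1`, and `R^{k+t} = -R^k`. -/
def Rcyc (t : ℕ) (k : ℕ) : Vec t :=
  if k % (2 * t) < t then Rvec t (k % (2 * t)) else -(Rvec t (k % (2 * t) - t))

/-- `q(A) = ℓ`: an (automatically, the unique) inclusion-minimal subset of `V(R)`
summing to `T_A` has cardinality `ℓ`. -/
def qIs (t : ℕ) (A : Finset (Fin t)) (ℓ : ℕ) : Prop :=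
  ∃ Q : Finset (Vec t), IsMinDecomp t (Rcyc t) (topeOf t A) Q ∧ Q.card = ℓ

/-- `c(m;n) = binom(n-1, m-1)`, the number of compositions of `n` into `m` positive
parts (zero whenever `m = 0` or `n ≤ 0`). -/
def comp (m : ℕ) (n : ℤ) : ℕ :=
  if 1 ≤ m ∧ 1 ≤ n then ((n - 1).toNat).choose (m - 1) else 0

/-- The number of ternary Smirnov words (words with no two equal adjacent letters)
over the alphabet `(θ, α, β) = (0, 1, 2)` with Parikh vector `(k, i, j)`
(that is, `k` letters `θ`, `i` letters `α`, `j` letters `β`), starting with the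
letter `s'` and ending with the letter `s''`. -/
def Tm (s' s'' : Fin 3) (k i j : ℕ) : ℕ :=
  Set.ncard { w : List (Fin 3) | List.Chain' (· ≠ ·) w ∧
    w.count 0 = k ∧ w.count 1 = i ∧ w.count 2 = j ∧
    w.head? = some s' ∧ w.getLast? = some s'' }

/-- The number of Smirnov words over the alphabet `(θ, α, β, γ) = (0, 1, 2, 3)` with
Parikh vector `(k, i, j, h)`, starting with `s'` and ending with `s''`. -/
def Fr (s' s'' : Fin 4) (k i j h : ℕ) : ℕ :=
  Set.ncard { w : List (Fin 4) | List.Chain' (· ≠ ·) w ∧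
    w.count 0 = k ∧ w.count 1 = i ∧ w.count 2 = j ∧ w.count 3 = h ∧
    w.head? = some s' ∧ w.getLast? = some s'' }

/-!
Telescoping along half of the cycle, every coordinate `j` is flipped by some step
`D^k → D^{k+1}` with `k < t`, because `D^t = -D^0`; that step is a multiple of the `j`-th unit
vector, so `D^0, …, D^{t-1}` span `ℝ^t` and coordinates with respect to them are unique.
It remains to prove the identity for the vectors `T_A` themselves. Since `T_A = 1 - 2 · 1_A`, it
combines inclusion–exclusion for the indicators `1_A` with `∑_{∅ ≠ S ⊆ [a]} (-1)^{|S|} = -1`,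
which accounts for the constant term.
-/

theorem exists_lt_ne_succ_of_ne {α : Type*} {f : ℕ → α} {n : ℕ} (h : f 0 ≠ f n) :
    ∃ k < n, f k ≠ f (k + 1) := by
  contrapose! h
  induction n with
  | zero => rfl
  | succ n ih => exact (ih fun k hk => h k (hk.trans n.lt_succ_self)).trans (h n n.lt_succ_self)

theorem sub_eq_single_of_hamming_eq_one {t : ℕ} {X Y : Vec t} (h : hamming X Y = 1) {j : Fin t}
    (hj : X j ≠ Y j) : X - Y = Pi.single j (X j - Y j) := by
  classical
  ext i
  rcases eq_or_ne i j with rfl | hij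
  · simp
  · have hi : X i = Y i := by
      by_contra hi
      exact hij (card_le_one.mp h.le i (by simpa using hi) j (by simpa using hj))
    simp [hij, hi]

namespace IsSymCycle

variable {t : ℕ} {D : ℕ → Vec t}

theorem dim_pos (hD : IsSymCycle t D) : 0 < t := by
  refine Nat.pos_of_ne_zero ?_
  rintro rfl
  simpa [hamming] using hD.adj 0

theorem apply_dim_eq_neg (hD : IsSymCycle t D) : D t = -D 0 := by
  simpa using hD.symm 0 (Nat.zero_le _)

theorem exists_flip (hD : IsSymCycle t D) (j : Fin t) : ∃ k < t, D k j ≠ D (k + 1) j := by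
  apply exists_lt_ne_succ_of_ne (f := fun k => D k j)
  rw [hD.apply_dim_eq_neg]
  rcases hD.vertex 0 j with h | h <;> norm_num [h]

theorem mem_span (hD : IsSymCycle t D) {k : ℕ} (hk : k ≤ t) :
    D k ∈ Submodule.span ℝ (Set.range fun i : Fin t => D i) := by
  rcases hk.lt_or_eq with hk | rfl
  · exact Submodule.subset_span ⟨⟨k, hk⟩, rfl⟩
  · rw [hD.apply_dim_eq_neg]
    exact Submodule.neg_mem _ (Submodule.subset_span ⟨⟨0, hD.dim_pos⟩, rfl⟩)

theorem single_mem_span (hD : IsSymCycle t D) (j : Fin t) :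
    Pi.single j 1 ∈ Submodule.span ℝ (Set.range fun i : Fin t => D i) := by
  obtain ⟨k, hk, hkj⟩ := hD.exists_flip j
  have hstep : D k - D (k + 1) = (D k j - D (k + 1) j) • Pi.single j (1 : ℝ) := by
    rw [sub_eq_single_of_hamming_eq_one (hD.adj k) hkj, ← Pi.single_smul, smul_eq_mul, mul_one]
  rw [← Submodule.smul_mem_iff _ (sub_ne_zero.mpr hkj), ← hstep]
  exact Submodule.sub_mem _ (hD.mem_span hk.le) (hD.mem_span hk)

theorem span_eq_top (hD : IsSymCycle t D) :
    Submodule.span ℝ (Set.range fun i : Fin t => D i) = ⊤ := by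
  rw [eq_top_iff, ← (Pi.basisFun ℝ (Fin t)).span_eq, Submodule.span_le]
  rintro _ ⟨j, rfl⟩
  rw [Pi.basisFun_apply]
  exact hD.single_mem_span j

theorem linearIndependent (hD : IsSymCycle t D) :
    LinearIndependent ℝ fun i : Fin t => D i :=
  linearIndependent_of_top_le_span_of_card_eq_finrank hD.span_eq_top.ge (by simp)

end IsSymCycle

theorem sum_powerset_nonempty_neg_one_pow_card {R ι : Type*} [Ring R] {s : Finset ι}
    (hs : s.Nonempty) : ∑ S ∈ s.powerset with S.Nonempty, (-1 : R) ^ #S = -1 := by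
  have hall : ∑ S ∈ s.powerset, (-1 : R) ^ #S = 0 := by
    exact_mod_cast congrArg (Int.cast : ℤ → R) (sum_powerset_neg_one_pow_card_of_nonempty hs)
  have hempty : ∑ S ∈ s.powerset with ¬S.Nonempty, (-1 : R) ^ #S = 1 := by
    classical simp [filter_eq']
  rw [← sum_filter_add_sum_filter_not _ Finset.Nonempty, hempty] at hall
  exact eq_neg_of_add_eq_zero_left hall

theorem coe_inf_eq_iInter {ι α : Type*} [Fintype α] [DecidableEq α] (S : Finset ι)
    (A : ι → Finset α) : ((S.inf A : Finset α) : Set α) = ⋂ k ∈ S, (A k : Set α) := by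
  ext i
  simp [Finset.mem_inf]

theorem topeOf_apply_eq_one_sub_two_mul_indicator {t : ℕ} (S : Finset (Fin t)) (i : Fin t) :
    topeOf t S i = 1 - 2 * (S : Set (Fin t)).indicator 1 i := by
  by_cases hi : i ∈ S <;> norm_num [topeOf, hi]

theorem topeOf_biUnion {t : ℕ} {ι : Type*} {s : Finset ι} (hs : s.Nonempty)
    (A : ι → Finset (Fin t)) :
    topeOf t (s.biUnion A) =
      -∑ S ∈ s.powerset with S.Nonempty, (-1 : ℝ) ^ #S • topeOf t (S.inf A) := by
  ext i
  have hIE : ((s.biUnion A : Finset (Fin t)) : Set (Fin t)).indicator (1 : Vec t) i =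
      -∑ S ∈ s.powerset with S.Nonempty,
        (-1 : ℝ) ^ #S * ((S.inf A : Finset (Fin t)) : Set (Fin t)).indicator 1 i := by
    have h := indicator_biUnion_eq_sum_powerset s (fun k => (A k : Set (Fin t))) (1 : Vec t) i
    simpa [pow_succ, coe_inf_eq_iInter] using h
  calc
    topeOf t (s.biUnion A) i
        = 1 + 2 * ∑ S ∈ s.powerset with S.Nonempty,
            (-1 : ℝ) ^ #S * ((S.inf A : Finset (Fin t)) : Set (Fin t)).indicator 1 i := by
      rw [topeOf_apply_eq_one_sub_two_mul_indicator, hIE]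
      ring
    _ = -∑ S ∈ s.powerset with S.Nonempty,
          (-1 : ℝ) ^ #S * (1 - 2 * ((S.inf A : Finset (Fin t)) : Set (Fin t)).indicator 1 i) := by
      simp only [mul_sub, mul_one, sum_sub_distrib, mul_left_comm _ (2 : ℝ), ← mul_sum,
        sum_powerset_nonempty_neg_one_pow_card hs]
      ring
    _ = (-∑ S ∈ s.powerset with S.Nonempty, (-1 : ℝ) ^ #S • topeOf t (S.inf A)) i := by
      simp only [Pi.neg_apply, Finset.sum_apply, Pi.smul_apply, smul_eq_mul,
        topeOf_apply_eq_one_sub_two_mul_indicator]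

theorem stmt3_general {t : ℕ} {κ ι : Type*} [Fintype κ] {v : κ → Vec t}
    (hv : LinearIndependent ℝ v) {s : Finset ι} (hs : s.Nonempty) (A : ι → Finset (Fin t))
    {xU : κ → ℝ} (hU : topeOf t (s.biUnion A) = ∑ k, xU k • v k) {xf : Finset ι → κ → ℝ}
    (hxf : ∀ S ⊆ s, S.Nonempty → topeOf t (S.inf A) = ∑ k, xf S k • v k) :
    xU = -∑ S ∈ s.powerset with S.Nonempty, (-1 : ℝ) ^ #S • xf S := by
  apply hv.fintypeLinearCombination_injective
  calc
    Fintype.linearCombination ℝ v xU = topeOf t (s.biUnion A) := hU.symm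
    _ = -∑ S ∈ s.powerset with S.Nonempty, (-1 : ℝ) ^ #S • topeOf t (S.inf A) :=
      topeOf_biUnion hs A
    _ = -∑ S ∈ s.powerset with S.Nonempty,
          (-1 : ℝ) ^ #S • Fintype.linearCombination ℝ v (xf S) := by
      congr 1
      refine sum_congr rfl fun S hS => ?_
      obtain ⟨hSs, hne⟩ := mem_filter.mp hS
      rw [hxf S (mem_powerset.mp hSs) hne, Fintype.linearCombination_apply]
    _ = Fintype.linearCombination ℝ v
          (-∑ S ∈ s.powerset with S.Nonempty, (-1 : ℝ) ^ #S • xf S) := by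
      simp only [map_neg, map_sum, map_smul]

/-- Inclusion–Exclusion for the `x`-vectors:
`x(T_{A_1 ∪ … ∪ A_a}, D) = -∑_{∅ ≠ S ⊆ [a]} (-1)^{|S|} x(T_{⋂_{s ∈ S} A_s}, D)`. -/
theorem stmt3 (t : ℕ) (ht : 3 ≤ t) (D : ℕ → Vec t) (hD : IsSymCycle t D)
    (a : ℕ) (ha : 1 ≤ a) (A : Fin a → Finset (Fin t))
    (xU : Fin t → ℝ) (hU : IsXVec t D (topeOf t (Finset.univ.biUnion A)) xU)
    (xf : Finset (Fin a) → Fin t → ℝ)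
    (hxf : ∀ S : Finset (Fin a), S.Nonempty → IsXVec t D (topeOf t (S.inf A)) (xf S)) :
    xU = -∑ S ∈ Finset.univ.powerset.filter (fun S : Finset (Fin a) => S.Nonempty),
      ((-1 : ℝ) ^ S.card) • xf S :=
  stmt3_general hD.linearIndependent ⟨⟨0, ha⟩, mem_univ _⟩ A hU.2 fun S _ hS => (hxf S hS).2
end
end

section
/- Let D be a symmetric cycle in the hypercube graph H(t,2) and let T be a vertex of {1,-1}^t that does not lie on the cycle, i.e. T is not a member of V(D). Writing Q(T,D) = {Q^0, Q^1, ..., Q^{q(T)-1}}, one has sum over unordered pairs 0 <= i < j <= q(T)-1 of d(Q^i,Q^j) = ( 1 - (1/t)|T^-| + (1/t) sum_{Q in Q(T,D)} |Q^-| ) * ( -|T^-| + sum_{Q in Q(T,D)} |Q^-| ). -/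
open Finset

noncomputable section

/-!
For vertices of the hypercube, `d(X, Y) = (t - ⟨X, Y⟩) / 2`. Summed over all ordered pairs from a
family of `q` vertices with sum `T`, the scalar products collapse by bilinearity to `⟨T, T⟩`, which
is `t` when `T` is itself a vertex; hence the unordered pairs contribute `t (q² - 1) / 4`.
Likewise `|X⁻| = (t - ∑ X(e)) / 2` is affine in `X`, so the negative parts of the family exceed
that of `T` by `δ = t (q - 1) / 2` in total. The identity is then
`t (q² - 1) / 4 = (1 + δ / t) δ`.
-/

section

variable {ι : Type*} {t : ℕ} {X Y T : Vec t} {s : Finset ι} {v : ι → Vec t}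

theorem hamming_self (X : Vec t) : hamming X X = 0 := by
  simp [hamming]

theorem IsPMVertex.sprod_self (hX : IsPMVertex X) : sprod X X = t := by
  have h_sq (i : Fin t) : X i * X i = 1 := mul_self_eq_one_iff.2 (hX i)
  simp [sprod, h_sq]

theorem hamming_eq_sub_sprod (hX : IsPMVertex X) (hY : IsPMVertex Y) :
    (hamming X Y : ℝ) = (t - sprod X Y) / 2 := by
  classical
  have h_coord (i : Fin t) : (if X i ≠ Y i then 1 else 0 : ℝ) = (1 - X i * Y i) / 2 := by
    rcases hX i with hXi | hXi <;> rcases hY i with hYi | hYi <;> norm_num [hXi, hYi]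
  calc (hamming X Y : ℝ) = ∑ i, if X i ≠ Y i then 1 else 0 := by
        rw [Finset.sum_boole, hamming]
    _ = ∑ i, (1 - X i * Y i) / 2 := Finset.sum_congr rfl fun i _ => h_coord i
    _ = (t - sprod X Y) / 2 := by
        simp [← Finset.sum_div, Finset.sum_sub_distrib, sprod]

theorem negCard_eq_sub_sum (hX : IsPMVertex X) : (negCard X : ℝ) = (t - ∑ i, X i) / 2 := by
  classical
  have h_coord (i : Fin t) : (if X i = -1 then 1 else 0 : ℝ) = (1 - X i) / 2 := by
    rcases hX i with hXi | hXi <;> norm_num [hXi]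
  calc (negCard X : ℝ) = ∑ i, if X i = -1 then 1 else 0 := by
        rw [Finset.sum_boole, negCard]
    _ = ∑ i, (1 - X i) / 2 := Finset.sum_congr rfl fun i _ => h_coord i
    _ = (t - ∑ i, X i) / 2 := by
        simp [← Finset.sum_div, Finset.sum_sub_distrib]

theorem sum_product_sprod (s : Finset ι) (v : ι → Vec t) :
    ∑ p ∈ s ×ˢ s, sprod (v p.1) (v p.2) = sprod (∑ j ∈ s, v j) (∑ j ∈ s, v j) := by
  change ∑ p ∈ s ×ˢ s, v p.1 ⬝ᵥ v p.2 = (∑ j ∈ s, v j) ⬝ᵥ ∑ j ∈ s, v j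
  rw [Finset.sum_product, sum_dotProduct]
  simp only [dotProduct_sum]

theorem sum_offDiag_hamming (hv : ∀ j ∈ s, IsPMVertex (v j)) :
    ∑ p ∈ s.offDiag, (hamming (v p.1) (v p.2) : ℝ) =
      (t * (#s : ℝ) ^ 2 - sprod (∑ j ∈ s, v j) (∑ j ∈ s, v j)) / 2 := by
  classical
  calc ∑ p ∈ s.offDiag, (hamming (v p.1) (v p.2) : ℝ)
      = ∑ p ∈ s ×ˢ s, (hamming (v p.1) (v p.2) : ℝ) := by
        rw [← Finset.diag_union_offDiag, Finset.sum_union s.disjoint_diag_offDiag,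
          Finset.sum_diag]
        simp only [hamming_self, Nat.cast_zero, Finset.sum_const_zero, zero_add]
    _ = ∑ p ∈ s ×ˢ s, (t - sprod (v p.1) (v p.2)) / 2 :=
        Finset.sum_congr rfl fun p hp =>
          have ⟨hp₁, hp₂⟩ := Finset.mem_product.1 hp
          hamming_eq_sub_sprod (hv p.1 hp₁) (hv p.2 hp₂)
    _ = (t * (#s : ℝ) ^ 2 - sprod (∑ j ∈ s, v j) (∑ j ∈ s, v j)) / 2 := by
        rw [← Finset.sum_div, Finset.sum_sub_distrib, sum_product_sprod, Finset.sum_const,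
          Finset.card_product, nsmul_eq_mul]
        push_cast
        ring

theorem sum_negCard (hv : ∀ j ∈ s, IsPMVertex (v j)) :
    ∑ j ∈ s, (negCard (v j) : ℝ) = (t * #s - ∑ i, (∑ j ∈ s, v j) i) / 2 := by
  calc ∑ j ∈ s, (negCard (v j) : ℝ) = ∑ j ∈ s, (t - ∑ i, v j i) / 2 :=
        Finset.sum_congr rfl fun j hj => negCard_eq_sub_sum (hv j hj)
    _ = (t * #s - ∑ i, (∑ j ∈ s, v j) i) / 2 := by
        simp only [← Finset.sum_div, Finset.sum_sub_distrib, Finset.sum_const, nsmul_eq_mul,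
          Finset.sum_apply]
        rw [Finset.sum_comm, mul_comm]

theorem IsSymCycle.isPMVertex_of_mem_VD {D : ℕ → Vec t} (hD : IsSymCycle t D)
    (hX : X ∈ VD t D) : IsPMVertex X := by
  obtain ⟨k, -, rfl⟩ := Finset.mem_image.1 hX
  exact hD.vertex k

theorem stmt6_general (ht : t ≠ 0) (hv : ∀ j ∈ s, IsPMVertex (v j)) (hT : IsPMVertex T)
    (h_sum : ∑ j ∈ s, v j = T) :
    (∑ p ∈ s.offDiag, (hamming (v p.1) (v p.2) : ℝ)) / 2 =
      (1 - (1 / (t : ℝ)) * (negCard T : ℝ) + (1 / (t : ℝ)) * ∑ j ∈ s, (negCard (v j) : ℝ)) *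
        (-(negCard T : ℝ) + ∑ j ∈ s, (negCard (v j) : ℝ)) := by
  have h_pairs : ∑ p ∈ s.offDiag, (hamming (v p.1) (v p.2) : ℝ) = t * ((#s : ℝ) ^ 2 - 1) / 2 := by
    rw [sum_offDiag_hamming hv, h_sum, hT.sprod_self]
    ring
  have h_excess : ∑ j ∈ s, (negCard (v j) : ℝ) = negCard T + t * ((#s : ℝ) - 1) / 2 := by
    rw [sum_negCard hv, h_sum, negCard_eq_sub_sum hT]
    ring
  rw [h_pairs, h_excess]
  field_simp
  ring

end

open Classical in
/-- for `T ∉ V(D)`,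
`∑_{i<j} d(Q^i,Q^j) = (1 - |T⁻|/t + (∑_Q |Q⁻|)/t) ⬝ (-|T⁻| + ∑_Q |Q⁻|)`;
the sum over unordered pairs of distinct members of `Q(T,D)` is half the sum over
the off-diagonal pairs. -/
theorem stmt6 (t : ℕ) (ht : 3 ≤ t) (D : ℕ → Vec t) (hD : IsSymCycle t D)
    (T : Vec t) (hT : IsPMVertex T) (hTD : T ∉ VD t D)
    (Q : Finset (Vec t)) (hQ : IsMinDecomp t D T Q) :
    (∑ p ∈ Q.offDiag, (hamming p.1 p.2 : ℝ)) / 2 =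
      (1 - (1 / (t : ℝ)) * (negCard T : ℝ) +
          (1 / (t : ℝ)) * ∑ q ∈ Q, (negCard q : ℝ)) *
        (-(negCard T : ℝ) + ∑ q ∈ Q, (negCard q : ℝ)) := by
  have ht₀ : t ≠ 0 := by lia
  exact stmt6_general (v := id) ht₀ (fun q hq => hD.isPMVertex_of_mem_VD (hQ.1 hq)) hT hQ.2.1
end
end
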